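/- For every vertex v of the graph B_7, the induced subgraph of B_7 obtained by deleting v is word-representable; consequently, since B_7 itself is not word-representable, B_7 is a minimal non-word-representable graph. -/

import Mathlib

/-!
If a word represents `G`, orient each edge from the letter occurring first to the other. The two
letters of an edge `x → y` satisfy `#y ≤ #x ≤ #y + 1` in every prefix of the word, and these
inequalities squeeze the counts along a directed path whose ends are adjacent, so that any two
letters of the path alternate: the orientation is semi-transitive.

Vertices are numbered from `0`. In `B₇` the clique `4, 5, 6, 7, 8` is linearly ordered by a
semi-transitive orientation. A vertex outside the clique with exactly two neighbours `p`, `q` in it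
forces the other clique vertices to lie all between `p` and `q` or all outside, that is, `p` and `q`
are neighbours in the cyclic order of the clique. The vertices `0, 2, 3, 1` do this for the edges of
the 4-cycle `5, 6, 8, 7`, but the cyclic order on five points has no 4-cycle of neighbours.

Each vertex-deleted subgraph is represented by an explicit word, up to an automorphism of order 4.
-/

/-- Two distinct letters `x` and `y` alternate in the word `w` if the subsequence of `w`
formed by all occurrences of `x` and `y` has no two equal consecutive letters. -/
def Alternates {V : Type*} [DecidableEq V] (w : List V) (x y : V) : Prop :=
  (w.filter (fun z => decide (z = x ∨ z = y))).Chain' (· ≠ ·)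

/-- A graph `G` is word-representable if there is a word over its vertex set, in which
every vertex occurs, such that two distinct vertices alternate in the word iff
they are adjacent in `G`. -/
def WordRepresentable {V : Type*} [DecidableEq V] (G : SimpleGraph V) : Prop :=
  ∃ w : List V, (∀ v : V, v ∈ w) ∧
    ∀ x y : V, x ≠ y → (Alternates w x y ↔ G.Adj x y)

/-- The graph `B₇` on vertices `{1,…,9}` (vertex `i` of the paper is `i - 1` here):
cliques on `{1,2,3,4}` and on `{5,6,7,8,9}` together with the edges
`{1,6},{2,6},{1,7},{3,7},{2,8},{4,8},{3,9},{4,9}`. -/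
def B7 : SimpleGraph (Fin 9) :=
  SimpleGraph.fromRel (fun a b => (a, b) ∈
    ([(0,1),(0,2),(0,3),(1,2),(1,3),(2,3),
      (4,5),(4,6),(4,7),(4,8),(5,6),(5,7),(5,8),(6,7),(6,8),(7,8),
      (0,5),(1,5),(0,6),(2,6),(1,7),(3,7),(2,8),(3,8)] : List (Fin 9 × Fin 9)))

theorem alternates_iff_isChain {V : Type*} [DecidableEq V] {w : List V} {x y : V} :
    Alternates w x y ↔ (w.filter (fun z => decide (z = x ∨ z = y))).IsChain (· ≠ ·) :=
  Iff.rfl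

instance {V : Type*} [DecidableEq V] (w : List V) (x y : V) : Decidable (Alternates w x y) :=
  decidable_of_iff _ alternates_iff_isChain.symm

instance : DecidableRel B7.Adj := fun a b =>
  decidable_of_iff _ (SimpleGraph.fromRel_adj _ a b).symm

theorem forall_prefix_cons_iff {α : Type*} {a : α} {l : List α} {P : List α → Prop} :
    (∀ s, s <+: a :: l → P s) ↔ P [] ∧ ∀ s, s <+: l → P (a :: s) := by
  grind [List.prefix_cons_iff]

section Prefixes

variable {V : Type*} [DecidableEq V] {w : List V} {x y z u v : V} {l : List V}

/-- In every prefix of `w` the letter `x` occurs at least as often as `y`. Unlike `Precedes`,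
this relation is transitive. -/
def Leads (w : List V) (x y : V) : Prop :=
  ∀ s, s <+: w → s.count y ≤ s.count x

/-- In every prefix of `w` the letter `x` occurs as often as `y`, or once more. This says that `x`
and `y` alternate in `w` with `x` occurring first, and orients the edges of a graph represented
by `w`. -/
def Precedes (w : List V) (x y : V) : Prop :=
  ∀ s, s <+: w → s.count y ≤ s.count x ∧ s.count x ≤ s.count y + 1

theorem Precedes.leads (h : Precedes w x y) : Leads w x y := fun s hs => (h s hs).1

theorem precedes_cons_left (hxy : x ≠ y) : Precedes (x :: w) x y ↔ Precedes w y x := by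
  simp only [Precedes, forall_prefix_cons_iff, List.count_nil, List.count_cons_self,
    List.count_cons_of_ne hxy]
  grind

theorem not_precedes_cons_right (hxy : x ≠ y) : ¬ Precedes (y :: w) x y := fun h => by
  simpa [hxy.symm] using h [y] (by simp)

theorem precedes_cons_of_ne (hx : z ≠ x) (hy : z ≠ y) :
    Precedes (z :: w) x y ↔ Precedes w x y := by
  simp [Precedes, forall_prefix_cons_iff, List.count_cons_of_ne hx, List.count_cons_of_ne hy]

theorem isChain_cons_filter_iff_precedes (hxy : x ≠ y) :
    (y :: w.filter (fun z => decide (z = x ∨ z = y))).IsChain (· ≠ ·) ↔ Precedes w x y := by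
  induction w generalizing x y with
  | nil => simp [Precedes]
  | cons z w ih =>
    rcases eq_or_ne z x with rfl | hx
    · simp [precedes_cons_left hxy, ← ih hxy.symm, hxy.symm, or_comm]
    rcases eq_or_ne z y with rfl | hy
    · simp [not_precedes_cons_right hxy]
    · simpa [precedes_cons_of_ne hx hy, hx, hy] using ih hxy

theorem alternates_iff_precedes_or_precedes (hxy : x ≠ y) :
    Alternates w x y ↔ Precedes w x y ∨ Precedes w y x := by
  rw [← isChain_cons_filter_iff_precedes hxy, ← isChain_cons_filter_iff_precedes hxy.symm,
    alternates_iff_isChain]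
  simp only [or_comm (b := _ = x)]
  have : ∀ z ∈ w.filter (fun z => decide (z = x ∨ z = y)), z = x ∨ z = y := by simp
  cases hw : w.filter (fun z => decide (z = x ∨ z = y)) with
  | nil => simp
  | cons z t => grind

theorem Leads.idxOf_le_idxOf (h : Leads w x y) (hx : x ∈ w) (hy : y ∈ w) :
    w.idxOf x ≤ w.idxOf y := by
  have hy' : y ∈ w.take (w.idxOf y + 1) := (List.mem_take_iff_idxOf_lt hy).2 (Nat.lt_succ_self _)
  have hx' : x ∈ w.take (w.idxOf y + 1) :=
    List.count_pos_iff.1 ((List.count_pos_iff.2 hy').trans_le (h _ (List.take_prefix _ _)))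
  exact Nat.lt_succ_iff.1 ((List.mem_take_iff_idxOf_lt hx).1 hx')

theorem Precedes.pairwise_of_isChain (h : Precedes w u v)
    (hl : (u :: (l ++ [v])).IsChain (Leads w)) : (u :: (l ++ [v])).Pairwise (Precedes w) := by
  have : Trans (Leads w) (Leads w) (Leads w) :=
    ⟨fun hab hbc s hs => (hbc s hs).trans (hab s hs)⟩
  have hpair := List.isChain_iff_pairwise.1 hl
  have hu : ∀ x ∈ u :: (l ++ [v]), Leads w u x :=
    List.forall_mem_cons.2 ⟨fun _ _ => le_rfl, fun _ => List.rel_of_pairwise_cons hpair⟩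
  have hv : ∀ x ∈ u :: (l ++ [v]), Leads w x v := by
    rw [← List.cons_append, List.pairwise_append] at hpair
    rw [← List.cons_append, List.forall_mem_append, List.forall_mem_singleton]
    exact ⟨fun x hx => hpair.2.2 x hx v (List.mem_singleton_self v), fun _ _ => le_rfl⟩
  refine hpair.imp_of_mem fun {x y} hx hy hxy s hs => ⟨hxy s hs, ?_⟩
  calc s.count x ≤ s.count u := hu x hx s hs
    _ ≤ s.count v + 1 := (h s hs).2
    _ ≤ s.count y + 1 := Nat.succ_le_succ (hv y hy s hs)

end Prefixes

section SemiTransitive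

open Set

variable {V : Type*} {G : SimpleGraph V} {K : Set V} {a p q r s t x y : V}

/-- Orienting every edge of `G` from its smaller to its larger end gives a semi-transitive
orientation: a directed path whose ends are adjacent induces a clique. Acyclicity of the orientation
is encoded by the linear order. -/
def IsSemiTransitive [LinearOrder V] (G : SimpleGraph V) : Prop :=
  ∀ (u v : V) (l : List V), (u :: (l ++ [v])).IsChain (fun x y => x < y ∧ G.Adj x y) →
    G.Adj u v → (u :: (l ++ [v])).Pairwise G.Adj

theorem WordRepresentable.exists_isSemiTransitive [DecidableEq V] (h : WordRepresentable G) :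
    ∃ _ : LinearOrder V, IsSemiTransitive G := by
  obtain ⟨w, hw, hG⟩ := h
  let _ : LinearOrder V := LinearOrder.lift' w.idxOf fun x y => (List.idxOf_inj (hw x)).1
  have hprec : ∀ {x y}, x < y → G.Adj x y → Precedes w x y := fun {x y} hlt hadj =>
    ((alternates_iff_precedes_or_precedes hadj.ne).1 ((hG x y hadj.ne).2 hadj)).resolve_right
      fun h => hlt.not_ge (h.leads.idxOf_le_idxOf (hw y) (hw x))
  refine ⟨inferInstance, fun u v l hl huv => ?_⟩
  have hlt : (u :: (l ++ [v])).Pairwise (· < ·) :=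
    List.isChain_iff_pairwise.1 (hl.imp fun _ _ h => h.1)
  have huv' : Precedes w u v := hprec (List.rel_of_pairwise_cons hlt (by simp)) huv
  have hpair := huv'.pairwise_of_isChain (hl.imp fun _ _ h => (hprec h.1 h.2).leads)
  exact hlt.imp₂ (fun x y hxy h => (hG x y hxy.ne).1
    ((alternates_iff_precedes_or_precedes hxy.ne).2 (.inl h))) hpair

theorem mem_uIoo_iff_lt_or_lt [LinearOrder V] : x ∈ uIoo p q ↔ p < x ∧ x < q ∨ q < x ∧ x < p := by
  rcases le_total p q with h | h <;> grind [uIoo_of_le, uIoo_of_ge]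

theorem IsSemiTransitive.adj_of_path [LinearOrder V] (hG : IsSemiTransitive G)
    (hpq : p < q ∧ G.Adj p q) (hqr : q < r ∧ G.Adj q r) (hrs : r < s ∧ G.Adj r s)
    (hps : G.Adj p s) : G.Adj p r ∧ G.Adj q s := by
  have := hG p s [q, r] (by simp [hpq, hqr, hrs]) hps
  grind

theorem IsSemiTransitive.mem_uIoo_of_mem_uIoo [LinearOrder V] (hG : IsSemiTransitive G)
    (hap : G.Adj a p) (haq : G.Adj a q) (hxp : G.Adj x p) (hxq : G.Adj x q)
    (hax : ¬ G.Adj a x) (hx : x ∈ uIoo p q) : a ∈ uIoo p q := by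
  wlog hpq : p < q generalizing p q
  · rw [uIoo_comm] at hx ⊢
    exact this haq hap hxq hxp hx (by grind [mem_uIoo_iff_lt_or_lt])
  rw [uIoo_of_lt hpq] at hx ⊢
  obtain ⟨hpx, hxq'⟩ := hx
  -- If `a` is not between `p` and `q`, then `a → p → x → q` or `p → x → q → a` is a directed path
  -- with adjacent ends, which forces the missing edge `ax`.
  constructor
  · by_contra! hle
    exact hax (hG.adj_of_path ⟨hle.lt_of_ne hap.ne, hap⟩ ⟨hpx, hxp.symm⟩ ⟨hxq', hxq⟩ haq).1
  · by_contra! hle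
    exact hax (hG.adj_of_path ⟨hpx, hxp.symm⟩ ⟨hxq', hxq⟩ ⟨hle.lt_of_ne haq.ne', haq.symm⟩
      hap.symm).2.symm

theorem mem_uIoo_iff_xor [LinearOrder V] (hp : x ≠ p) (hq : x ≠ q) (hr : x ≠ r) :
    x ∈ uIoo p r ↔ Xor (x ∈ uIoo p q) (x ∈ uIoo q r) := by
  grind [mem_uIoo_iff_lt_or_lt]

theorem exists_separating_pair [LinearOrder V] (hpq : p ≠ q) (hpr : p ≠ r) (hps : p ≠ s)
    (hqr : q ≠ r) (hqs : q ≠ s) (hrs : r ≠ s) :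
    ¬ (r ∈ uIoo p q ↔ s ∈ uIoo p q) ∨ ¬ (q ∈ uIoo p r ↔ s ∈ uIoo p r) ∨
      ¬ (p ∈ uIoo q r ↔ s ∈ uIoo q r) := by
  grind [mem_uIoo_iff_lt_or_lt]

/-- The points `p` and `q` are neighbours in the cyclic order which the linear order induces on
`K`: the other points of `K` are either all between `p` and `q` or all outside. -/
def CyclicallyConsecutive [LinearOrder V] (K : Set V) (p q : V) : Prop :=
  ∀ x ∈ K \ {p, q}, ∀ y ∈ K \ {p, q}, (x ∈ uIoo p q ↔ y ∈ uIoo p q)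

theorem CyclicallyConsecutive.symm [LinearOrder V] (h : CyclicallyConsecutive K p q) :
    CyclicallyConsecutive K q p := by
  rwa [CyclicallyConsecutive, uIoo_comm, Set.pair_comm]

theorem CyclicallyConsecutive.mem_uIoo_iff [LinearOrder V] (hpq : CyclicallyConsecutive K p q)
    (hqr : CyclicallyConsecutive K q r) (hx : x ∈ K \ {p, q, r}) (hy : y ∈ K \ {p, q, r}) :
    x ∈ uIoo p r ↔ y ∈ uIoo p r := by
  simp only [mem_sdiff, mem_insert_iff, mem_singleton_iff, not_or] at hx hy
  rw [mem_uIoo_iff_xor hx.2.1 hx.2.2.1 hx.2.2.2, mem_uIoo_iff_xor hy.2.1 hy.2.2.1 hy.2.2.2,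
    hpq x (by simp [hx]) y (by simp [hy]), hqr x (by simp [hx]) y (by simp [hy])]

theorem not_cyclicallyConsecutive_of_four_cycle [LinearOrder V]
    (hmem : ∀ x ∈ [p, q, r, s, t], x ∈ K) (hnodup : [p, q, r, s, t].Nodup)
    (hpq : CyclicallyConsecutive K p q) (hqr : CyclicallyConsecutive K q r)
    (hrs : CyclicallyConsecutive K r s) :
    ¬ CyclicallyConsecutive K s p := fun hsp => by
  simp only [List.forall_mem_cons] at hmem
  have hpr : q ∈ uIoo p r ↔ s ∈ uIoo p r :=
    (hsp.symm.mem_uIoo_iff hrs.symm (y := t) (by grind) (by grind)).trans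
      (hpq.mem_uIoo_iff hqr (by grind) (by grind))
  rcases exists_separating_pair (p := p) (q := q) (r := r) (s := s) (by grind) (by grind)
    (by grind) (by grind) (by grind) (by grind) with h | h | h
  · exact h (hpq r (by grind) s (by grind))
  · exact h hpr
  · exact h (hqr p (by grind) s (by grind))

theorem IsSemiTransitive.cyclicallyConsecutive [LinearOrder V] (hG : IsSemiTransitive G)
    (hK : G.IsClique K) (hp : p ∈ K) (hq : q ∈ K) (h : ∃ a, G.neighborSet a ∩ K = {p, q}) :
    CyclicallyConsecutive K p q := by
  obtain ⟨a, ha⟩ := h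
  have hadj : ∀ {x}, x ∈ K → (G.Adj a x ↔ x = p ∨ x = q) := fun {x} hx => by
    simpa [hx] using Set.ext_iff.1 ha x
  have hap : G.Adj a p := (hadj hp).2 (.inl rfl)
  have haq : G.Adj a q := (hadj hq).2 (.inr rfl)
  have key : ∀ x ∈ K \ {p, q}, (x ∈ uIoo p q ↔ a ∈ uIoo p q) := fun x ⟨hx, hne⟩ => by
    have hax : ¬ G.Adj a x := mt (hadj hx).1 hne
    obtain ⟨hne_p, hne_q⟩ := not_or.1 hne
    have hxp : G.Adj x p := hK hx hp hne_p
    have hxq : G.Adj x q := hK hx hq hne_q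
    exact ⟨hG.mem_uIoo_of_mem_uIoo hap haq hxp hxq hax,
      hG.mem_uIoo_of_mem_uIoo hxp hxq hap haq (mt SimpleGraph.Adj.symm hax)⟩
  exact fun x hx y hy => (key x hx).trans (key y hy).symm

theorem not_wordRepresentable_of_isClique_of_neighborSet_inter_eq [DecidableEq V]
    (hK : G.IsClique K) (hmem : ∀ x ∈ [p, q, r, s, t], x ∈ K)
    (hnodup : [p, q, r, s, t].Nodup) (hpq : ∃ a, G.neighborSet a ∩ K = {p, q})
    (hqr : ∃ a, G.neighborSet a ∩ K = {q, r}) (hrs : ∃ a, G.neighborSet a ∩ K = {r, s})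
    (hsp : ∃ a, G.neighborSet a ∩ K = {s, p}) :
    ¬ WordRepresentable G := fun h => by
  obtain ⟨_, hG⟩ := h.exists_isSemiTransitive
  obtain ⟨hp, hq, hr, hs⟩ : p ∈ K ∧ q ∈ K ∧ r ∈ K ∧ s ∈ K := by
    simp_all only [List.forall_mem_cons, and_self]
  exact not_cyclicallyConsecutive_of_four_cycle hmem hnodup (hG.cyclicallyConsecutive hK hp hq hpq)
    (hG.cyclicallyConsecutive hK hq hr hqr) (hG.cyclicallyConsecutive hK hr hs hrs)
    (hG.cyclicallyConsecutive hK hs hp hsp)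

end SemiTransitive

section Transfer

variable {V W : Type*} [DecidableEq V] [DecidableEq W] {G : SimpleGraph V} {H : SimpleGraph W}

theorem alternates_map_iff {f : V → W} (hf : Function.Injective f) {w : List V} {x y : V} :
    Alternates (w.map f) (f x) (f y) ↔ Alternates w x y := by
  simp [alternates_iff_isChain, List.filter_map, List.isChain_map, hf.eq_iff, Function.comp_def]

theorem WordRepresentable.of_iso (e : G ≃g H) : WordRepresentable G → WordRepresentable H := by
  rintro ⟨w, hw, hG⟩
  refine ⟨w.map e, fun v => List.mem_map.2 ⟨e.symm v, hw _, e.apply_symm_apply v⟩, ?_⟩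
  rw [e.surjective.forall₂]
  intro x y hxy
  rw [alternates_map_iff e.injective, hG x y (ne_of_apply_ne e hxy), e.map_adj_iff]

theorem WordRepresentable.induce_of_iso (e : G ≃g H) (v : V)
    (h : WordRepresentable (G.induce {x | x ≠ v})) :
    WordRepresentable (H.induce {x | x ≠ e v}) :=
  h.of_iso (e.induce <| e.toEquiv.bijOn fun _ => e.injective.ne_iff)

theorem wordRepresentable_induce {S : Set V} (w : List V) (hw : ∀ x, x ∈ w ↔ x ∈ S)
    (hG : ∀ x ∈ S, ∀ y ∈ S, x ≠ y → (Alternates w x y ↔ G.Adj x y)) :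
    WordRepresentable (G.induce S) := by
  lift w to List S using fun x hx => (hw x).1 hx
  refine ⟨w, fun x => ?_, fun x y hxy => ?_⟩
  · simpa using hw x
  · rw [← alternates_map_iff Subtype.val_injective,
      hG x x.2 y y.2 (Subtype.val_injective.ne hxy), SimpleGraph.comap_adj]
    rfl

end Transfer

namespace B7

theorem isClique_Ici_four : B7.IsClique (Set.Ici 4) := by
  have : ∀ x : Fin 9, 4 ≤ x → ∀ y, 4 ≤ y → x ≠ y → B7.Adj x y := by decide
  exact this

theorem not_wordRepresentable : ¬ WordRepresentable B7 :=
  not_wordRepresentable_of_isClique_of_neighborSet_inter_eq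
    (p := 5) (q := 6) (r := 8) (s := 7) (t := 4)
    isClique_Ici_four (by simp) (by decide)
    ⟨0, by ext x; revert x; decide⟩ ⟨2, by ext x; revert x; decide⟩
    ⟨3, by ext x; revert x; decide⟩ ⟨1, by ext x; revert x; decide⟩

/-- The automorphism of `B₇` that turns the 4-cycle `5, 6, 8, 7` by one step. The vertices
`0, 2, 3, 1` are turned along, as they are joined to the successive edges of this cycle. Its orbits
reduce the deletion of an arbitrary vertex to that of `0`, `4` or `5`. -/
def rotation : B7 ≃g B7 where
  toEquiv := c[5, 6, 8, 7] * c[0, 2, 3, 1]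
  map_rel_iff' {a b} := by decide +revert

theorem wordRepresentable_induce_ne_zero : WordRepresentable (B7.induce {x | x ≠ 0}) :=
  wordRepresentable_induce [4, 1, 5, 3, 7, 2, 1, 8, 3, 6, 2] (by decide) (by decide)

theorem wordRepresentable_induce_ne_four : WordRepresentable (B7.induce {x | x ≠ 4}) :=
  wordRepresentable_induce [7, 1, 8, 3, 6, 2, 5, 7, 8, 0, 6, 1, 5, 3, 7] (by decide) (by decide)

theorem wordRepresentable_induce_ne_five : WordRepresentable (B7.induce {x | x ≠ 5}) :=
  wordRepresentable_induce [2, 7, 3, 1, 4, 6, 0, 8, 7, 4, 2, 6, 3, 8, 1, 7, 4] (by decide)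
    (by decide)

theorem wordRepresentable_induce_ne (v : Fin 9) : WordRepresentable (B7.induce {x | x ≠ v}) := by
  have h0 := wordRepresentable_induce_ne_zero
  have h2 := h0.induce_of_iso rotation
  have h3 := h2.induce_of_iso rotation
  have h1 := h3.induce_of_iso rotation
  have h4 := wordRepresentable_induce_ne_four
  have h5 := wordRepresentable_induce_ne_five
  have h6 := h5.induce_of_iso rotation
  have h8 := h6.induce_of_iso rotation
  have h7 := h8.induce_of_iso rotation
  fin_cases v
  exacts [h0, h1, h2, h3, h4, h5, h6, h7, h8]

end B7

/-- Deleting any vertex of `B₇` yields a word-representable graph; since `B₇` itself is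
not word-representable, `B₇` is a minimal non-word-representable graph. -/
theorem stmt17 :
    (∀ v : Fin 9, WordRepresentable (B7.induce {x | x ≠ v})) ∧ ¬ WordRepresentable B7 :=
  ⟨B7.wordRepresentable_induce_ne, B7.not_wordRepresentable⟩
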